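/- Let X be a compact metric space with Lebesgue covering dimension dim(X) = d and let T : X → X be an injective continuous map with dim(P_m) < m/2 for every m ≤ 2d. Let n ≥ 1, let H_n = P_n ∖ P_{n−1} be the set of points of period exactly n, and set t_y = min(n−1, 2d). Let Ū_y ⊂ H_n be a compact set with Ū_y ∩ T^l Ū_y = ∅ for l = 1, …, t_y, and let Ū_x ⊂ X ∖ P_n be a compact set such that the sets Ū_x, TŪ_x, …, T^{2d}Ū_x, Ū_y, TŪ_y, …, T^{t_y}Ū_y are pairwise disjoint. Then D_{Ū_x × Ū_y} = {h ∈ C(X,[0,1]) : h_0^{2d}(x') ≠ h_0^{2d}(y') for all x' ∈ Ū_x, y' ∈ Ū_y} is dense in C(X,[0,1]) with the supremum metric. -/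

import Mathlib

/-!
Menger–Nöbeling perturbation. Approximate the delay vectors of `h` on `Ū_x` and on `Ū_y` by maps
into polyhedra, with barycentric coordinates given by partitions of unity of multiplicity at most
`d + 1`. On `Ū_y` periodicity makes the delay vector a linear image of its first `t_y + 1` entries,
so those vertices cannot be moved freely; on `Ū_x` all `2d + 1` entries are independent. Moving the
vertices of the `Ū_x`-polyhedron alone into general position with respect to the other one makes
the affine spans of any `d + 1` vertices of each disjoint, since `d + d < 2d + 1`. The disjointness
of the images makes the two perturbed maps the delay vectors of one function on their union, which
extends to `X` by Tietze's theorem without increasing its distance to `h`.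
-/

open Function Set Topology unitInterval

/-- A topological space `X` has Lebesgue covering dimension at most `m`:
every finite open cover admits a finite open refinement in which no point
belongs to more than `m + 1` sets. -/
def CovDimLE (X : Type*) [TopologicalSpace X] (m : ℕ) : Prop :=
  ∀ (n : ℕ) (U : Fin n → Set X), (∀ i, IsOpen (U i)) → (⋃ i, U i) = univ →
    ∃ (k : ℕ) (V : Fin k → Set X), (∀ j, IsOpen (V j)) ∧ (⋃ j, V j) = univ ∧
      (∀ j, ∃ i, V j ⊆ U i) ∧ ∀ x : X, Nat.card {j : Fin k // x ∈ V j} ≤ m + 1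

/-- The Lebesgue covering dimension of a topological space, as an element of `ℕ∞`
(`⊤` if no finite bound exists). -/
noncomputable def covDim (X : Type*) [TopologicalSpace X] : ℕ∞ :=
  sInf {e : ℕ∞ | ∃ m : ℕ, e = m ∧ CovDimLE X m}

/-- The set of periodic points of `T` of period at most `n`. -/
def periodicLE {X : Type*} (T : X → X) (n : ℕ) : Set X :=
  {x | ∃ p, 1 ≤ p ∧ p ≤ n ∧ T^[p] x = x}

/-- The `(2d+1)`-delay observation map associated to an observable `h : C(X, [0,1])`
and the dynamics `T : X → X`: `x ↦ (h x, h (T x), …, h (T^{2d} x))`. -/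
def delayMap {X : Type*} [TopologicalSpace X] (T : X → X) (d : ℕ)
    (h : C(X, I)) : X → (Fin (2 * d + 1) → I) :=
  fun x i => h (T^[(i : ℕ)] x)

section CoveringDimension

variable {X Z : Type*} [TopologicalSpace X] [TopologicalSpace Z] {d e : ℕ}

lemma CovDimLE.mono (hde : d ≤ e) (hX : CovDimLE X d) : CovDimLE X e := by
  intro n U hUo hUu
  obtain ⟨k, V, hVo, hVu, hVU, hV⟩ := hX n U hUo hUu
  exact ⟨k, V, hVo, hVu, hVU, fun x => (hV x).trans (by lia)⟩

lemma covDim_le_natCast_iff : covDim X ≤ d ↔ CovDimLE X d := by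
  refine ⟨fun h => ?_, fun h => sInf_le ⟨d, rfl, h⟩⟩
  have hne : {e : ℕ∞ | ∃ m : ℕ, e = m ∧ CovDimLE X m}.Nonempty := by
    by_contra hempty
    rw [covDim, Set.not_nonempty_iff_eq_empty.mp hempty, sInf_empty, top_le_iff] at h
    exact ENat.natCast_ne_top d h
  obtain ⟨m, hm, hX⟩ := csInf_mem hne
  rw [covDim, hm, Nat.cast_le] at h
  exact hX.mono h

lemma CovDimLE.of_isClosedEmbedding (hX : CovDimLE X d) {f : Z → X} (hf : IsClosedEmbedding f) :
    CovDimLE Z d := by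
  intro n U hUo hUu
  rcases isEmpty_or_nonempty Z with _ | hZ
  · exact ⟨0, fun _ => ∅, by simp, Subsingleton.elim _ _, by simp, isEmptyElim⟩
  obtain ⟨i₀, -⟩ := mem_iUnion.mp (hUu ▸ mem_univ hZ.some)
  choose W hWo hWU using fun i => hf.isOpen_iff.mp (hUo i)
  have hcover : (⋃ i, (W i ∪ (range f)ᶜ)) = univ := by
    refine eq_univ_of_forall fun x => mem_iUnion.mpr ?_
    by_cases hx : x ∈ range f
    · obtain ⟨z, rfl⟩ := hx
      obtain ⟨i, hz⟩ := mem_iUnion.mp (hUu ▸ mem_univ z)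
      rw [← hWU] at hz
      exact ⟨i, Or.inl hz⟩
    · exact ⟨i₀, Or.inr hx⟩
  obtain ⟨k, V, hVo, hVu, hVW, hV⟩ :=
    hX n _ (fun i => (hWo i).union hf.isClosed_range.isOpen_compl) hcover
  refine ⟨k, fun j => f ⁻¹' V j, fun j => (hVo j).preimage hf.continuous, ?_, fun j => ?_,
    fun z => hV (f z)⟩
  · rw [← preimage_iUnion, hVu, preimage_univ]
  · obtain ⟨i, hi⟩ := hVW j
    refine ⟨i, fun z hz => ?_⟩
    rw [← hWU]
    exact (hi hz).resolve_right (not_not_intro (mem_range_self z))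

lemma CovDimLE.exists_partitionOfUnity [CompactSpace X] [NormalSpace X] {M : Type*}
    [PseudoMetricSpace M] (hX : CovDimLE X d) (f : C(X, M)) {ε : ℝ} (hε : 0 < ε) :
    ∃ (k : ℕ) (p : Fin k → X) (ρ : PartitionOfUnity (Fin k) X univ),
      (∀ x j, ρ j x ≠ 0 → dist (f (p j)) (f x) < ε) ∧ ∀ x, (ρ.finsupport x).card ≤ d + 1 := by
  let U (p : X) : Set X := {x | dist (f p) (f x) < ε}
  have hU (p : X) : IsOpen (U p) := isOpen_lt (by fun_prop) continuous_const
  obtain ⟨t, ht⟩ := isCompact_univ.elim_finite_subcover U hU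
    fun x _ => mem_iUnion.mpr ⟨x, by simpa [U] using hε⟩
  obtain ⟨k, V, hVo, hVu, hVU, hV⟩ := hX t.card (fun i => U (t.equivFin.symm i)) (fun _ => hU _) (by
    refine eq_univ_of_forall fun x => ?_
    obtain ⟨p, hp, hx⟩ := mem_iUnion₂.mp (ht (mem_univ x))
    exact mem_iUnion.mpr ⟨t.equivFin ⟨p, hp⟩, by simpa using hx⟩)
  choose c hc using hVU
  obtain ⟨ρ, hρ⟩ := PartitionOfUnity.exists_isSubordinate_of_locallyFinite isClosed_univ V hVo
    (locallyFinite_of_finite V) hVu.ge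
  have hmem (x : X) (j : Fin k) (hj : ρ j x ≠ 0) : x ∈ V j := hρ j (subset_tsupport _ hj)
  refine ⟨k, fun j => t.equivFin.symm (c j), ρ, fun x j hj => hc j (hmem x j hj), fun x => ?_⟩
  classical
  refine le_trans ?_ (hV x)
  rw [Nat.card_eq_fintype_card, Fintype.card_subtype]
  exact Finset.card_le_card fun j hj =>
    Finset.mem_filter.mpr ⟨Finset.mem_univ j, hmem x j ((ρ.mem_finsupport x).mp hj)⟩

end CoveringDimension

section GeneralPosition

lemma disjoint_affineSpan_insert {k V P : Type*} [DivisionRing k] [AddCommGroup V] [Module k V]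
    [AddTorsor V P] {s t : Set P} {z : P}
    (hst : Disjoint (affineSpan k s : Set P) (affineSpan k t))
    (hz : z ∉ affineSpan k (s ∪ t)) :
    Disjoint (affineSpan k (insert z s) : Set P) (affineSpan k t) := by
  refine Set.disjoint_left.mpr fun q hq hqt => hz ?_
  have hs : affineSpan k s ≤ affineSpan k (s ∪ t) := affineSpan_mono k subset_union_left
  have ht : affineSpan k t ≤ affineSpan k (s ∪ t) := affineSpan_mono k subset_union_right
  obtain rfl | ⟨p, hp⟩ := s.eq_empty_or_nonempty
  · obtain rfl : q = z := by simpa using hq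
    exact ht hqt
  have hps : p ∈ affineSpan k s := subset_affineSpan k s hp
  rw [SetLike.mem_coe, ← affineSpan_insert_affineSpan,
    AffineSubspace.mem_affineSpan_insert_iff hps] at hq
  obtain ⟨r, p₀, hp₀, hq⟩ := hq
  have hr : r ≠ 0 := by
    rintro rfl
    rw [zero_smul, zero_vadd] at hq
    exact Set.disjoint_left.mp hst hp₀ (hq ▸ hqt)
  have hzq : z = r⁻¹ • (q -ᵥ p₀) +ᵥ p := by
    rw [hq, vadd_vsub, inv_smul_smul₀ hr, vsub_vadd]
  rw [hzq]
  exact AffineSubspace.smul_vsub_vadd_mem _ _ (ht hqt) (hs hp₀) (hs hps)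

lemma affineSpan_coe_finset_ne_top {k V P : Type*} [DivisionRing k] [AddCommGroup V] [Module k V]
    [AddTorsor V P] [FiniteDimensional k V] {s : Finset P} (hs : s.card ≤ Module.finrank k V) :
    affineSpan k (s : Set P) ≠ ⊤ := by
  classical
  intro htop
  rcases s.eq_empty_or_nonempty with rfl | hne
  · simp at htop
  · obtain ⟨m, hm⟩ := Nat.exists_eq_succ_of_ne_zero hne.card_pos.ne'
    have hle := finrank_vectorSpan_image_finset_le k id s hm
    rw [Finset.image_id, ← direction_affineSpan, htop, AffineSubspace.direction_top,
      finrank_top] at hle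
    lia

lemma affineSpan_union_image_ne_top {k V P ι κ : Type*} [DivisionRing k] [AddCommGroup V]
    [Module k V] [AddTorsor V P] [FiniteDimensional k V] (u : ι → P) (v : κ → P) {A : Finset ι}
    {B : Finset κ} (hAB : A.card + B.card ≤ Module.finrank k V) :
    affineSpan k (u '' A ∪ v '' B) ≠ ⊤ := by
  classical
  have hcard : (A.image u ∪ B.image v).card ≤ Module.finrank k V :=
    (Finset.card_union_le _ _).trans
      ((add_le_add Finset.card_image_le Finset.card_image_le).trans hAB)
  simpa using affineSpan_coe_finset_ne_top hcard

variable {E : Type*} [NormedAddCommGroup E] [NormedSpace ℝ E] [FiniteDimensional ℝ E]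

lemma exists_mem_forall_notMem_affineSubspace {ι : Type*} [Countable ι]
    (P : ι → AffineSubspace ℝ E) (hP : ∀ i, P i ≠ ⊤) {S : Set E} (hSo : IsOpen S)
    (hS : S.Nonempty) : ∃ z ∈ S, ∀ i, z ∉ P i := by
  borelize E
  let μ : MeasureTheory.Measure E := MeasureTheory.Measure.addHaar
  have hnull : μ (⋃ i, P i) = 0 := MeasureTheory.measure_iUnion_null fun i =>
    MeasureTheory.Measure.addHaar_affineSubspace μ (P i) (hP i)
  by_contra! hcover
  exact (hSo.measure_pos μ hS).ne'
    (MeasureTheory.measure_mono_null (fun z hz => mem_iUnion.mpr (hcover z hz)) hnull)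

lemma exists_forall_disjoint_affineSpan {ι κ : Type*} [Finite ι] [Finite κ] (v : κ → E)
    {S : ι → Set E} (hSo : ∀ i, IsOpen (S i)) (hS : ∀ i, (S i).Nonempty) :
    ∃ u : ι → E, (∀ i, u i ∈ S i) ∧
      ∀ (A : Finset ι) (B : Finset κ), A.card + B.card ≤ Module.finrank ℝ E + 1 →
        Disjoint (affineSpan ℝ (u '' A) : Set E) (affineSpan ℝ (v '' B)) := by
  classical
  have := Fintype.ofFinite ι
  suffices H : ∀ s : Finset ι, ∃ u : ι → E, (∀ i, u i ∈ S i) ∧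
      ∀ A ⊆ s, ∀ B : Finset κ, A.card + B.card ≤ Module.finrank ℝ E + 1 →
        Disjoint (affineSpan ℝ (u '' A) : Set E) (affineSpan ℝ (v '' B)) by
    obtain ⟨u, huS, hu⟩ := H Finset.univ
    exact ⟨u, huS, fun A => hu A A.subset_univ⟩
  intro s
  induction s using Finset.induction_on with
  | empty =>
    choose u hu using hS
    refine ⟨u, hu, fun A hA B _ => ?_⟩
    simp [Finset.subset_empty.mp hA]
  | insert j s hj ih =>
    obtain ⟨u, huS, hu⟩ := ih
    obtain ⟨z, hzS, hz⟩ := exists_mem_forall_notMem_affineSubspace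
      (fun D : {D : Finset ι × Finset κ // D.1.card + D.2.card ≤ Module.finrank ℝ E} =>
        affineSpan ℝ (u '' D.1.1 ∪ v '' D.1.2))
      (fun D => affineSpan_union_image_ne_top u v D.2) (hSo j) (hS j)
    refine ⟨Function.update u j z, fun i => ?_, fun A hA B hAB => ?_⟩
    · rcases eq_or_ne i j with rfl | hij
      · simpa using hzS
      · simpa [hij] using huS i
    have hAs : A.erase j ⊆ s := Finset.subset_insert_iff.mp hA
    have himage : Function.update u j z '' (A.erase j) = u '' (A.erase j) :=
      image_congr fun i hi => Function.update_of_ne (Finset.ne_of_mem_erase hi) z u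
    by_cases hjA : j ∈ A
    · have hcard : (A.erase j).card + 1 = A.card := Finset.card_erase_add_one hjA
      rw [← Finset.insert_erase hjA, Finset.coe_insert, image_insert_eq, Function.update_self,
        himage]
      exact disjoint_affineSpan_insert (hu _ hAs B (by lia)) (hz ⟨(A.erase j, B), by lia⟩)
    · rw [Finset.erase_eq_of_notMem hjA] at hAs himage
      rw [himage]
      exact hu A hAs B hAB

end GeneralPosition

section Barycentric

variable {A B ι E E' : Type*} [TopologicalSpace A] [TopologicalSpace B]

/-- The map to the polyhedron with vertices `u j` whose barycentric coordinates are the functions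
of the partition of unity `ρ`. -/
noncomputable def barycentricMap [AddCommGroup E] [Module ℝ E] [TopologicalSpace E]
    [ContinuousAdd E] [ContinuousSMul ℝ E] (ρ : PartitionOfUnity ι A univ) (u : ι → E) :
    C(A, E) where
  toFun x := ∑ᶠ j, ρ j x • u j
  continuous_toFun := ρ.continuous_finsum_smul fun _ _ _ => continuousAt_const

lemma barycentricMap_mem [AddCommGroup E] [Module ℝ E] [TopologicalSpace E]
    [ContinuousAdd E] [ContinuousSMul ℝ E] (ρ : PartitionOfUnity ι A univ) {u : ι → E} {x : A}
    {C : Set E} (hC : Convex ℝ C) (hu : ∀ j, ρ j x ≠ 0 → u j ∈ C) : barycentricMap ρ u x ∈ C :=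
  ρ.finsum_smul_mem_convex (g := fun j _ => u j) (mem_univ x) hu hC

variable [NormedAddCommGroup E] [NormedSpace ℝ E] [NormedAddCommGroup E'] [NormedSpace ℝ E']

lemma dist_barycentricMap_lt (ρ : PartitionOfUnity ι A univ) {u : ι → E} {x : A} {q : E} {ε : ℝ}
    (hu : ∀ j, ρ j x ≠ 0 → dist (u j) q < ε) : dist (barycentricMap ρ u x) q < ε :=
  barycentricMap_mem ρ (convex_ball q ε) hu

lemma exists_approx_forall_ne [FiniteDimensional ℝ E] [CompactSpace A] [NormalSpace A]
    [CompactSpace B] [NormalSpace B] {a b : ℕ} (hA : CovDimLE A a) (hB : CovDimLE B b)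
    (hab : a + b < Module.finrank ℝ E) (Φ : E' →ₗ[ℝ] E) {C : Set E} {C' : Set E'}
    (hC : Convex ℝ C) (hCint : (interior C).Nonempty) (hC' : Convex ℝ C')
    (f : C(A, E)) (hf : ∀ x, f x ∈ C) (g : C(B, E')) (hg : ∀ y, g y ∈ C') {ε : ℝ} (hε : 0 < ε) :
    ∃ (f' : C(A, E)) (g' : C(B, E')), (∀ x, f' x ∈ C ∧ dist (f' x) (f x) < ε) ∧
      (∀ y, g' y ∈ C' ∧ dist (g' y) (g y) < ε) ∧ ∀ x y, f' x ≠ Φ (g' y) := by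
  obtain ⟨k, p, ρ, hρ, hρcard⟩ := hA.exists_partitionOfUnity f (half_pos hε)
  obtain ⟨l, q, τ, hτ, hτcard⟩ := hB.exists_partitionOfUnity g hε
  let S (i : Fin k) : Set E := Metric.ball (f (p i)) (ε / 2) ∩ interior C
  have hS (i : Fin k) : (S i).Nonempty := by
    have hcl : f (p i) ∈ closure (interior C) :=
      hC.closure_interior_eq_closure_of_nonempty_interior hCint ▸ subset_closure (hf (p i))
    exact mem_closure_iff.mp hcl _ Metric.isOpen_ball (Metric.mem_ball_self (half_pos hε))
  obtain ⟨u, huS, hu⟩ := exists_forall_disjoint_affineSpan (fun j => Φ (g (q j)))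
    (fun i => Metric.isOpen_ball.inter isOpen_interior) hS
  refine ⟨barycentricMap ρ u, barycentricMap τ fun j => g (q j), fun x => ⟨?_, ?_⟩,
    fun y => ⟨?_, ?_⟩, fun x y => ?_⟩
  · exact barycentricMap_mem ρ hC fun i _ => interior_subset (huS i).2
  · refine dist_barycentricMap_lt ρ fun i hi => ?_
    calc dist (u i) (f x) ≤ dist (u i) (f (p i)) + dist (f (p i)) (f x) := dist_triangle _ _ _
      _ < ε / 2 + ε / 2 := add_lt_add (huS i).1 (hρ x i hi)
      _ = ε := add_halves ε
  · exact barycentricMap_mem τ hC' fun j _ => hg (q j)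
  · exact dist_barycentricMap_lt τ (hτ y)
  · have hcard : (ρ.finsupport x).card + (τ.finsupport y).card ≤ Module.finrank ℝ E + 1 := by
      have := hρcard x
      have := hτcard y
      lia
    refine (hu _ _ hcard).ne_of_mem (barycentricMap_mem ρ (AffineSubspace.convex _) fun i hi => ?_)
      (barycentricMap_mem τ ((AffineSubspace.convex _).linear_preimage Φ) fun j hj => ?_)
    · exact subset_affineSpan ℝ _ (mem_image_of_mem u ((ρ.mem_finsupport x).mpr hi))
    · exact subset_affineSpan ℝ _
        (mem_image_of_mem (fun j => Φ (g (q j))) ((τ.mem_finsupport y).mpr hj))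

end Barycentric

section Extension

lemma exists_extension_dist_le {Y Z : Type*} [TopologicalSpace Y] [CompactSpace Y] [NormalSpace Y]
    [TopologicalSpace Z] {e : Z → Y} (he : IsClosedEmbedding e) (h₀ : C(Y, I)) (g : C(Z, I))
    {ε : ℝ} (hε : 0 ≤ ε) (hg : ∀ z, dist (g z) (h₀ (e z)) ≤ ε) :
    ∃ h : C(Y, I), (∀ z, h (e z) = g z) ∧ dist h h₀ ≤ ε := by
  have he_cont : Continuous e := he.continuous
  let δ : C(Z, ℝ) := ⟨fun z => g z - h₀ (e z), by fun_prop⟩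
  obtain ⟨Δ, hΔmem, hΔ⟩ := δ.exists_extension_forall_mem_of_isClosedEmbedding
    (t := Icc (-ε) ε) (fun z => abs_le.mp (hg z)) (nonempty_Icc.mpr (by linarith)) he
  refine ⟨⟨fun y => projIcc 0 1 zero_le_one (h₀ y + Δ y), by fun_prop⟩, fun z => ?_, ?_⟩
  · have hz : (h₀ (e z) : ℝ) + Δ (e z) = g z := by
      rw [show Δ (e z) = g z - h₀ (e z) from congrFun hΔ z, add_sub_cancel]
    rw [ContinuousMap.coe_mk, hz, projIcc_val]
  · refine (ContinuousMap.dist_le hε).mpr fun y => ?_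
    calc dist (projIcc (0 : ℝ) 1 zero_le_one (h₀ y + Δ y)) (h₀ y)
        = |(projIcc (0 : ℝ) 1 zero_le_one (h₀ y + Δ y) : ℝ)
            - projIcc (0 : ℝ) 1 zero_le_one (h₀ y)| := by
          rw [projIcc_val, Subtype.dist_eq, Real.dist_eq]
      _ ≤ |(h₀ y + Δ y) - h₀ y| := abs_projIcc_sub_projIcc _
      _ = |Δ y| := by rw [add_sub_cancel_left]
      _ ≤ ε := abs_le.mpr (hΔmem y)

lemma injective_sigma_desc {ι Y : Type*} {Z : ι → Type*} {f : ∀ i, Z i → Y}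
    (hf : ∀ i, Injective (f i)) (hd : Pairwise (Disjoint on fun i => range (f i))) :
    Injective fun z : Σ i, Z i => f z.1 z.2 := by
  rintro ⟨i, x⟩ ⟨j, y⟩ hxy
  obtain rfl : i = j := by
    by_contra hij
    exact (hd hij).ne_of_mem (mem_range_self x) (mem_range_self y) hxy
  exact congrArg (Sigma.mk i) (hf i hxy)

variable {A B Y K L : Type*} [TopologicalSpace A] [CompactSpace A] [TopologicalSpace B]
  [CompactSpace B] [TopologicalSpace Y] [CompactSpace Y] [T2Space Y] [Finite K] [Finite L]
  {α : K → C(A, Y)} {β : L → C(B, Y)}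

lemma exists_simultaneous_extension_dist_le (hα : ∀ k, Injective (α k))
    (hβ : ∀ l, Injective (β l))
    (hαβ : Pairwise (Disjoint on Sum.elim (fun k => range (α k)) fun l => range (β l)))
    (h₀ : C(Y, I)) (f : K → C(A, I)) (g : L → C(B, I)) {ε : ℝ} (hε : 0 ≤ ε)
    (hf : ∀ k x, dist (f k x) (h₀ (α k x)) ≤ ε) (hg : ∀ l y, dist (g l y) (h₀ (β l y)) ≤ ε) :
    ∃ h : C(Y, I), (∀ k x, h (α k x) = f k x) ∧ (∀ l y, h (β l y) = g l y) ∧ dist h h₀ ≤ ε := by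
  let e : (Σ _ : K, A) ⊕ (Σ _ : L, B) → Y :=
    Sum.elim (fun z => α z.1 z.2) (fun z => β z.1 z.2)
  let w : C((Σ _ : K, A) ⊕ (Σ _ : L, B), I) :=
    ⟨Sum.elim (fun z => f z.1 z.2) (fun z => g z.1 z.2),
      (continuous_sigma fun k => (f k).continuous).sumElim
        (continuous_sigma fun l => (g l).continuous)⟩
  have he : Continuous e := (continuous_sigma fun k => (α k).continuous).sumElim
    (continuous_sigma fun l => (β l).continuous)
  have he_inj : Injective e := by
    refine (injective_sigma_desc hα (hαβ.comp_of_injective Sum.inl_injective)).sumElim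
      (injective_sigma_desc hβ (hαβ.comp_of_injective Sum.inr_injective)) fun z z' => ?_
    exact (hαβ Sum.inl_ne_inr).ne_of_mem (mem_range_self z.2) (mem_range_self z'.2)
  have hw : ∀ z, dist (w z) (h₀ (e z)) ≤ ε := by
    rintro (⟨k, x⟩ | ⟨l, y⟩)
    exacts [hf k x, hg l y]
  obtain ⟨h, hhe, hh⟩ := exists_extension_dist_le (he.isClosedEmbedding he_inj) h₀ w hε hw
  exact ⟨h, fun k x => hhe (.inl ⟨k, x⟩), fun l y => hhe (.inr ⟨l, y⟩), hh⟩

end Extension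

lemma interior_Icc_zero_one_nonempty (K : Type*) [Finite K] :
    (interior (Icc (0 : K → ℝ) 1)).Nonempty := by
  rw [← pi_univ_Icc, interior_pi_set finite_univ]
  exact univ_pi_nonempty_iff.mpr fun _ => by simp

theorem dense_setOf_forall_exists_ne {A B Y K L : Type*} [TopologicalSpace A] [CompactSpace A]
    [NormalSpace A] [TopologicalSpace B] [CompactSpace B] [NormalSpace B] [TopologicalSpace Y]
    [CompactSpace Y] [T2Space Y] [Finite K] [Finite L] {a b : ℕ} (hA : CovDimLE A a)
    (hB : CovDimLE B b) (hK : a + b < Nat.card K) (φ : K → L) {α : K → C(A, Y)} {β : L → C(B, Y)}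
    (hα : ∀ k, Injective (α k)) (hβ : ∀ l, Injective (β l))
    (hαβ : Pairwise (Disjoint on Sum.elim (fun k => range (α k)) fun l => range (β l))) :
    Dense {h : C(Y, I) | ∀ x y, ∃ k, h (α k x) ≠ h (β (φ k) y)} := by
  have := Fintype.ofFinite K
  have := Fintype.ofFinite L
  refine Metric.dense_iff.mpr fun h₀ ε hε => ?_
  let f₀ : C(A, K → ℝ) := ⟨fun x k => h₀ (α k x), by fun_prop⟩
  let g₀ : C(B, L → ℝ) := ⟨fun y l => h₀ (β l y), by fun_prop⟩
  obtain ⟨f, g, hf, hg, hfg⟩ := exists_approx_forall_ne hA hB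
    (by rwa [Module.finrank_fintype_fun_eq_card, ← Nat.card_eq_fintype_card])
    (LinearMap.funLeft ℝ ℝ φ) (convex_Icc 0 1) (interior_Icc_zero_one_nonempty K)
    (convex_Icc 0 1) f₀ (fun x => ⟨fun k => (h₀ (α k x)).2.1, fun k => (h₀ (α k x)).2.2⟩)
    g₀ (fun y => ⟨fun l => (h₀ (β l y)).2.1, fun l => (h₀ (β l y)).2.2⟩) (half_pos hε)
  obtain ⟨h, hhα, hhβ, hh⟩ := exists_simultaneous_extension_dist_le hα hβ hαβ h₀
    (fun k => ⟨fun x => ⟨f x k, (hf x).1.1 k, (hf x).1.2 k⟩, by fun_prop⟩)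
    (fun l => ⟨fun y => ⟨g y l, (hg y).1.1 l, (hg y).1.2 l⟩, by fun_prop⟩) (half_pos hε).le
    (fun k x => (dist_le_pi_dist (f x) (f₀ x) k).trans (hf x).2.le)
    (fun l y => (dist_le_pi_dist (g y) (g₀ y) l).trans (hg y).2.le)
  refine ⟨h, Metric.mem_ball.mpr (hh.trans_lt (half_lt_self hε)), fun x y => ?_⟩
  obtain ⟨k, hk⟩ := Function.ne_iff.mp (hfg x y)
  refine ⟨k, fun heq => hk ?_⟩
  rw [hhα, hhβ] at heq
  exact congrArg Subtype.val heq

section Dynamics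

variable {X : Type*} {T : X → X}

lemma periodicLE_diff_subset_ptsOfPeriod (T : X → X) (n : ℕ) :
    periodicLE T n \ periodicLE T (n - 1) ⊆ ptsOfPeriod T n := by
  rintro x ⟨⟨p, hp, hpn, hx⟩, hx'⟩
  obtain rfl : p = n := by
    by_contra hne
    exact hx' ⟨p, hp, by lia, hx⟩
  exact hx

lemma injOn_iterate_of_le {s : Set X} {k m : ℕ} (hkm : k ≤ m) (hT : InjOn T^[m] s) :
    InjOn T^[k] s := by
  rw [← Nat.sub_add_cancel hkm, iterate_add] at hT
  exact hT.of_comp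

theorem stmt4_general [TopologicalSpace X] [CompactSpace X] [T2Space X] (hTc : Continuous T)
    {d n : ℕ} (hdim : covDim X ≤ d) (hn : 0 < n) {Ux Uy : Set X} (hUx : IsCompact Ux)
    (hUy : IsCompact Uy) (hT : InjOn T^[2 * d] Ux) (hper : Uy ⊆ ptsOfPeriod T n)
    (hdisj : Pairwise (Disjoint on
      (Sum.elim (fun k : Fin (2 * d + 1) => T^[(k : ℕ)] '' Ux)
                (fun k : Fin (min (n - 1) (2 * d) + 1) => T^[(k : ℕ)] '' Uy)))) :
    Dense {h : C(X, I) | ∀ x ∈ Ux, ∀ y ∈ Uy, delayMap T d h x ≠ delayMap T d h y} := by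
  have := isCompact_iff_compactSpace.mp hUx
  have := isCompact_iff_compactSpace.mp hUy
  have hX : CovDimLE X d := covDim_le_natCast_iff.mp hdim
  let α (k : Fin (2 * d + 1)) : C(Ux, X) :=
    ⟨Ux.domRestrict T^[k], (hTc.iterate k).comp continuous_subtype_val⟩
  let β (l : Fin (min (n - 1) (2 * d) + 1)) : C(Uy, X) :=
    ⟨Uy.domRestrict T^[l], (hTc.iterate l).comp continuous_subtype_val⟩
  let φ (k : Fin (2 * d + 1)) : Fin (min (n - 1) (2 * d) + 1) :=
    ⟨k % n, by have := Nat.mod_lt k hn; have := Nat.mod_le k n; lia⟩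
  have hα (k) : Injective (α k) :=
    (injOn_iterate_of_le (Nat.le_of_lt_succ k.isLt) hT).injective
  have hβ (l) : Injective (β l) :=
    (((bijOn_ptsOfPeriod T hn).iterate l).injOn.mono hper).injective
  have hrangeα (k) : range (α k) = T^[k] '' Ux := range_domRestrict _ _
  have hrangeβ (l) : range (β l) = T^[l] '' Uy := range_domRestrict _ _
  refine (dense_setOf_forall_exists_ne
    (hX.of_isClosedEmbedding hUx.isClosed.isClosedEmbedding_subtypeVal)
    (hX.of_isClosedEmbedding hUy.isClosed.isClosedEmbedding_subtypeVal)
    (by rw [Nat.card_fin]; lia) φ hα hβ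
    (by simpa only [hrangeα, hrangeβ] using hdisj)).mono fun h hh x hx y hy heq => ?_
  obtain ⟨k, hk⟩ := hh ⟨x, hx⟩ ⟨y, hy⟩
  have hmod : T^[k % n] y = T^[k] y := (hper hy).iterate_mod_apply k
  exact hk ((congrFun heq k).trans (congrArg h hmod.symm))

end Dynamics

theorem stmt4 {X : Type*} [MetricSpace X] [CompactSpace X]
    (T : X → X) (hTc : Continuous T) (hTi : Function.Injective T)
    (d : ℕ) (hdim : covDim X = d)
    (hper : ∀ m : ℕ, 1 ≤ m → m ≤ 2 * d →
      2 * covDim (periodicLE T m) < (m : ℕ∞))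
    (n : ℕ) (hn : 1 ≤ n)
    -- `Ū_y` is a compact subset of `H_n = P_n ∖ P_{n-1}`
    (Uy : Set X) (hUyc : IsCompact Uy)
    (hUyH : Uy ⊆ periodicLE T n \ periodicLE T (n - 1))
    -- `Ū_y ∩ T^l Ū_y = ∅` for `l = 1, …, t_y` where `t_y = min (n-1) (2d)`
    (hUyd : ∀ l : ℕ, 1 ≤ l → l ≤ min (n - 1) (2 * d) → Uy ∩ T^[l] '' Uy = ∅)
    -- `Ū_x` is a compact subset of `X ∖ P_n`
    (Ux : Set X) (hUxc : IsCompact Ux) (hUxP : Ux ⊆ (periodicLE T n)ᶜ)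
    -- `Ū_x, TŪ_x, …, T^{2d}Ū_x, Ū_y, TŪ_y, …, T^{t_y}Ū_y` are pairwise disjoint
    (hdisj : Pairwise (Disjoint on
      (Sum.elim (fun k : Fin (2 * d + 1) => T^[(k : ℕ)] '' Ux)
                (fun k : Fin (min (n - 1) (2 * d) + 1) => T^[(k : ℕ)] '' Uy)))) :
    Dense {h : C(X, I) |
      ∀ x' ∈ Ux, ∀ y' ∈ Uy, delayMap T d h x' ≠ delayMap T d h y'} :=
  stmt4_general hTc hdim.le hn hUxc hUyc (hTi.iterate (2 * d)).injOn
    (hUyH.trans (periodicLE_diff_subset_ptsOfPeriod T n)) hdisj
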